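/- Let N, T, M be positive integers and let r_1, …, r_N be nonnegative integers satisfying r_i ≤ T for every i and ∑_{i=1}^N r_i ≤ M·T. Then there exists an N×T matrix Q with entries in {0,1} whose i-th row sum equals r_i for every i and whose every column sum is at most M. -/

import Mathlib

/-!
Fill the rows one after another, putting the ones of each new row into columns that currently carry
the fewest ones. This greedy choice keeps the column sums within one of each other. At the end, a
column sum above `M` would force every column sum to be at least `M`, and the total would exceed `M`
times the number of columns.
-/

open Finset

/-- A load vector is balanced if any two of its entries differ by at most one. The one-sided
inequality suffices, since `a` and `b` can be exchanged. -/
def IsBalanced {κ : Type*} (f : κ → ℕ) : Prop :=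
  ∀ a b, f a ≤ f b + 1

namespace IsBalanced

variable {κ : Type*} {f : κ → ℕ}

theorem ite_mem_add [DecidableEq κ] (hf : IsBalanced f) {s : Finset κ}
    (hs : ∀ a ∈ s, ∀ b ∉ s, f a ≤ f b) :
    IsBalanced fun a => (if a ∈ s then 1 else 0) + f a := by
  intro a b
  by_cases h : a ∈ s ∧ b ∉ s
  · have hab := hs a h.1 b h.2
    simp only [h, if_true, if_false]
    lia
  · have hab := hf a b
    have hmem : (if a ∈ s then 1 else 0) ≤ if b ∈ s then 1 else 0 := by grind
    lia

theorem le_of_sum_le [Fintype κ] (hf : IsBalanced f) {M : ℕ}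
    (hsum : ∑ a, f a ≤ M * Fintype.card κ) (a : κ) : f a ≤ M := by
  by_contra! ha
  have hM : ∀ b, M ≤ f b := fun b => Nat.le_of_lt_succ (ha.trans_le (hf a b))
  have hlt : ∑ _ : κ, M < ∑ b, f b :=
    sum_lt_sum (fun b _ => hM b) ⟨a, mem_univ a, ha⟩
  rw [sum_const, card_univ, smul_eq_mul, mul_comm] at hlt
  exact hlt.not_ge hsum

end IsBalanced

theorem exists_finset_card_eq_and_forall_mem_le_forall_notMem {κ α : Type*} [Fintype κ]
    [LinearOrder α] (f : κ → α) {n : ℕ} (hn : n ≤ Fintype.card κ) :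
    ∃ s : Finset κ, #s = n ∧ ∀ a ∈ s, ∀ b ∉ s, f a ≤ f b := by
  classical
  induction n with
  | zero => exact ⟨∅, by simp⟩
  | succ n ih =>
    obtain ⟨s, hcard, hs⟩ := ih (Nat.le_of_succ_le hn)
    have hne : sᶜ.Nonempty := by
      rw [← card_pos, card_compl]
      lia
    obtain ⟨c, hc, hmin⟩ := exists_min_image sᶜ f hne
    rw [mem_compl] at hc
    refine ⟨insert c s, by rw [card_insert_of_notMem hc, hcard], fun a ha b hb => ?_⟩
    have hbs : b ∉ s := fun h => hb (mem_insert_of_mem h)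
    rcases mem_insert.mp ha with rfl | ha
    · exact hmin b (mem_compl.mpr hbs)
    · exact hs a ha b hbs

theorem exists_finset_family_card_eq_and_isBalanced {ι κ : Type*} [Fintype κ] [DecidableEq κ]
    (u : Finset ι) {r : ι → ℕ} (hr : ∀ i, r i ≤ Fintype.card κ) :
    ∃ S : ι → Finset κ, (∀ i, #(S i) = r i) ∧
      IsBalanced fun t => ∑ i ∈ u, if t ∈ S i then 1 else 0 := by
  classical
  induction u using Finset.induction_on with
  | empty =>
    choose S _ hS using fun i => exists_subset_card_eq (hr i)
    exact ⟨S, hS, fun _ _ => by simp⟩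
  | insert i u hi ih =>
    obtain ⟨S, hcard, hbal⟩ := ih
    obtain ⟨s, hs, hmin⟩ := exists_finset_card_eq_and_forall_mem_le_forall_notMem
      (fun t => ∑ j ∈ u, if t ∈ S j then 1 else 0) (hr i)
    refine ⟨Function.update S i s, fun j => ?_, ?_⟩
    · rcases eq_or_ne j i with rfl | hj
      · rw [Function.update_self, hs]
      · rw [Function.update_of_ne hj, hcard]
    · have hload (t : κ) : (∑ j ∈ insert i u, if t ∈ Function.update S i s j then 1 else 0) =
          (if t ∈ s then 1 else 0) + ∑ j ∈ u, if t ∈ S j then 1 else 0 := by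
        rw [sum_insert hi, Function.update_self]
        congr 1
        refine sum_congr rfl fun j hj => ?_
        rw [Function.update_of_ne (ne_of_mem_of_not_mem hj hi)]
      simpa only [hload] using hbal.ite_mem_add hmin

theorem exists_binary_matrix_with_row_sums_and_bounded_column_sums_general {ι κ : Type*}
    [Fintype ι] [Fintype κ] (M : ℕ) (r : ι → ℕ) (hr : ∀ i, r i ≤ Fintype.card κ)
    (hsum : ∑ i, r i ≤ M * Fintype.card κ) :
    ∃ Q : ι → κ → ℕ,
      (∀ i t, Q i t = 0 ∨ Q i t = 1) ∧
      (∀ i, ∑ t, Q i t = r i) ∧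
      (∀ t, ∑ i, Q i t ≤ M) := by
  classical
  obtain ⟨S, hcard, hbal⟩ := exists_finset_family_card_eq_and_isBalanced univ hr
  have hrow (i : ι) : (∑ t, if t ∈ S i then 1 else 0) = r i := by simp [hcard]
  refine ⟨fun i t => if t ∈ S i then 1 else 0, fun i t => (ite_eq_or_eq _ 1 0).symm, hrow,
    hbal.le_of_sum_le ?_⟩
  rw [sum_comm]
  simpa only [hrow] using hsum

/-- Given target row weights `r i ≤ T` with `∑ i, r i ≤ M * T`,
there exists a binary N×T matrix whose `i`-th row sum is `r i` and whose every
column sum is at most `M`. -/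
theorem exists_binary_matrix_with_row_sums_and_bounded_column_sums
    (N T M : ℕ) (hN : 0 < N) (hT : 0 < T) (hM : 0 < M)
    (r : Fin N → ℕ) (hr : ∀ i, r i ≤ T) (hsum : ∑ i : Fin N, r i ≤ M * T) :
    ∃ Q : Fin N → Fin T → ℕ,
      (∀ i t, Q i t = 0 ∨ Q i t = 1) ∧
      (∀ i : Fin N, ∑ t : Fin T, Q i t = r i) ∧
      (∀ t : Fin T, ∑ i : Fin N, Q i t ≤ M) :=
  exists_binary_matrix_with_row_sums_and_bounded_column_sums_general M r
    (by simpa using hr) (by simpa using hsum)
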